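/- Let u₁, u₂ solve ∂_t v = ν ∂²_x v − l(t,x) v on the strip [0, x₀] × ℝ with boundary conditions v(t,0) = v(t,x₀) = 0, where ‖l(t,·)‖_{C[0,x₀]} ≤ L for all t and ν(π/x₀)² > L. If the difference v = u₁ − u₂ is bounded in L²(0,x₀) as t → −∞, then v ≡ 0 on [0,x₀] × ℝ. -/

import Mathlib

open Real intervalIntegral

/-!
The time derivative of a solution need not be integrable and `l` need not be measurable, so `L²`
energy estimates are not available. Instead `|v|` is bounded by comparison. After rescaling,
`[a, b]` lies in `(0, π)` and the diffusivity `μ` still exceeds `L`. By Weierstrass approximation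
there is a finite sine series that is nonnegative on `[0, π]`, dominates `|v s|` on `[a, b]`, and
has nearly the same integral. It evolves explicitly under `∂ₜ h = μ ∂ₓ² h + L h`, and by the maximum
principle the evolution dominates `|v t|` for `t ≥ s`. Its coefficients are controlled by that
integral, so it decays like `exp ((L - μ) (t - s))`, and letting `s → -∞` gives `v t = 0`.
-/

open Set Filter Topology MeasureTheory Polynomial

theorem nonneg_of_isMaxOn_Icc_right {f : ℝ → ℝ} {f' a b : ℝ} (hab : a < b)
    (hf : HasDerivAt f f' b) (hmax : IsMaxOn f (Icc a b) b) : 0 ≤ f' := by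
  have hcone : a - b ∈ posTangentConeAt (Icc a b) b :=
    sub_mem_posTangentConeAt_of_segment_subset
      ((convex_Icc a b).segment_subset (right_mem_Icc.2 hab.le) (left_mem_Icc.2 hab.le))
  have hdir : (a - b) * f' ≤ 0 := by
    simpa using hmax.localize.hasFDerivWithinAt_nonpos hf.hasFDerivAt.hasFDerivWithinAt hcone
  exact nonneg_of_mul_nonpos_right hdir (sub_neg.2 hab)

theorem iteratedDeriv_two_nonpos_of_isLocalMax {f : ℝ → ℝ} {x : ℝ} (hmax : IsLocalMax f x)
    (hf : ContinuousAt f x) : iteratedDeriv 2 f x ≤ 0 := by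
  rw [iteratedDeriv_succ, iteratedDeriv_one]
  by_contra! hpos
  have hmin : IsLocalMin f x := isLocalMin_of_deriv_deriv_pos hpos hmax.deriv_eq_zero hf
  have hconst : f =ᶠ[𝓝 x] fun _ => f x := by
    filter_upwards [hmax, hmin] with y hle hge using le_antisymm hle hge
  simp [hconst.deriv.deriv_eq] at hpos

theorem exists_isMaxOn_parabolic_interior {a b s T : ℝ} {f : ℝ × ℝ → ℝ}
    (hf : ContinuousOn f (Icc s T ×ˢ Icc a b)) (hinit : ∀ x ∈ Icc a b, f (s, x) ≤ 0)
    (hleft : ∀ t ∈ Icc s T, f (t, a) ≤ 0) (hright : ∀ t ∈ Icc s T, f (t, b) ≤ 0)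
    {p : ℝ × ℝ} (hp : p ∈ Icc s T ×ˢ Icc a b) (hpos : 0 < f p) :
    ∃ t ∈ Ioc s T, ∃ x ∈ Ioo a b, IsMaxOn f (Icc s T ×ˢ Icc a b) (t, x) ∧ 0 < f (t, x) := by
  obtain ⟨⟨t, x⟩, ⟨ht, hx⟩, hmax⟩ :=
    (isCompact_Icc.prod isCompact_Icc).exists_isMaxOn ⟨p, hp⟩ hf
  simp only at ht hx
  have hpos' : 0 < f (t, x) := hpos.trans_le (hmax hp)
  have hs : s ≠ t := by
    rintro rfl
    exact hpos'.not_ge (hinit x hx)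
  have ha : a ≠ x := by
    rintro rfl
    exact hpos'.not_ge (hleft t ht)
  have hb : x ≠ b := by
    rintro rfl
    exact hpos'.not_ge (hright t ht)
  exact ⟨t, ⟨ht.1.lt_of_ne hs, ht.2⟩, x, ⟨hx.1.lt_of_ne ha, hx.2.lt_of_ne hb⟩, hmax, hpos'⟩

theorem heat_weak_maximum_principle {ν L a b s : ℝ} (hν : 0 ≤ ν) {w wt : ℝ → ℝ → ℝ}
    (hcont : ContinuousOn (fun p : ℝ × ℝ => w p.1 p.2) (Ici s ×ˢ Icc a b))
    (hderiv : ∀ t, s < t → ∀ x ∈ Ioo a b, HasDerivAt (fun r => w r x) (wt t x) t)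
    (hsub : ∀ t, s < t → ∀ x ∈ Ioo a b, 0 < w t x →
      wt t x ≤ ν * iteratedDeriv 2 (w t) x + L * w t x)
    (hinit : ∀ x ∈ Icc a b, w s x ≤ 0) (hleft : ∀ t, s ≤ t → w t a ≤ 0)
    (hright : ∀ t, s ≤ t → w t b ≤ 0) {t x : ℝ} (ht : s ≤ t) (hx : x ∈ Icc a b) :
    w t x ≤ 0 := by
  by_contra! hpos
  have hexp : ∀ r, 0 < exp (-(L + 1) * r) := fun r => exp_pos _
  -- The weight turns the zeroth-order term `L * w` into `-w`, which is negative where `w > 0`.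
  obtain ⟨t₀, ht₀, y, hy, hmax, hpos₀⟩ := exists_isMaxOn_parabolic_interior
    (f := fun p => exp (-(L + 1) * p.1) * w p.1 p.2) (T := t)
    (ContinuousOn.mul (by fun_prop) (hcont.mono (prod_mono_left Icc_subset_Ici_self)))
    (fun x hx => mul_nonpos_of_nonneg_of_nonpos (hexp s).le (hinit x hx))
    (fun r hr => mul_nonpos_of_nonneg_of_nonpos (hexp r).le (hleft r hr.1))
    (fun r hr => mul_nonpos_of_nonneg_of_nonpos (hexp r).le (hright r hr.1))
    (p := (t, x)) ⟨right_mem_Icc.2 ht, hx⟩ (mul_pos (hexp t) hpos)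
  have hle : ∀ r ∈ Icc s t, ∀ z ∈ Icc a b,
      exp (-(L + 1) * r) * w r z ≤ exp (-(L + 1) * t₀) * w t₀ y :=
    fun r hr z hz => hmax (mk_mem_prod hr hz)
  have hw : 0 < w t₀ y := pos_of_mul_pos_right hpos₀ (hexp t₀).le
  have htime : 0 ≤ wt t₀ y - (L + 1) * w t₀ y := by
    have hexp' : HasDerivAt (fun r => exp (-(L + 1) * r))
        (exp (-(L + 1) * t₀) * -(L + 1)) t₀ := by
      simpa using ((hasDerivAt_id t₀).const_mul (-(L + 1))).exp
    have hweighted := nonneg_of_isMaxOn_Icc_right ht₀.1 (hexp'.mul (hderiv t₀ ht₀.1 y hy))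
      fun r hr => hle r ⟨hr.1, hr.2.trans ht₀.2⟩ y (Ioo_subset_Icc_self hy)
    refine nonneg_of_mul_nonneg_right (a := exp (-(L + 1) * t₀)) ?_ (hexp t₀)
    linarith
  have hspace : iteratedDeriv 2 (w t₀) y ≤ 0 := by
    refine iteratedDeriv_two_nonpos_of_isLocalMax ?_ ?_
    · filter_upwards [Icc_mem_nhds hy.1 hy.2] with z hz
      exact le_of_mul_le_mul_left (hle t₀ (Ioc_subset_Icc_self ht₀) z hz) (hexp t₀)
    · exact (hcont.comp (f := fun z => (t₀, z)) (by fun_prop)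
        fun z hz => ⟨ht₀.1.le, hz⟩).continuousAt (Icc_mem_nhds hy.1 hy.2)
  linarith [hsub t₀ ht₀.1 y hy hw, mul_nonpos_of_nonneg_of_nonpos hν hspace]

theorem integral_cos_int_mul_zero_pi {k : ℤ} (hk : k ≠ 0) :
    ∫ θ in (0 : ℝ)..π, cos (k * θ) = 0 := by
  rw [integral_comp_mul_left cos (Int.cast_ne_zero.2 hk)]
  simp [sin_int_mul_pi]

theorem integral_sin_mul_sin_zero_pi (m n : ℕ) :
    ∫ θ in (0 : ℝ)..π, sin ((m + 1) * θ) * sin ((n + 1) * θ) = if m = n then π / 2 else 0 := by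
  have hprod : ∀ θ : ℝ, sin ((m + 1) * θ) * sin ((n + 1) * θ) =
      (cos (((m - n : ℤ) : ℝ) * θ) - cos (((m + n + 2 : ℤ) : ℝ) * θ)) / 2 := fun θ => by
    rw [eq_div_iff two_ne_zero, mul_comm, ← mul_assoc, two_mul_sin_mul_sin]
    push_cast
    ring_nf
  simp only [hprod, intervalIntegral.integral_div]
  rw [intervalIntegral.integral_sub (Continuous.intervalIntegrable (by fun_prop) _ _)
    (Continuous.intervalIntegrable (by fun_prop) _ _),
    integral_cos_int_mul_zero_pi (k := m + n + 2) (by positivity), sub_zero]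
  split_ifs with hmn
  · simp [hmn]
  · rw [integral_cos_int_mul_zero_pi (by lia), zero_div]

/-- The finite sine series `∑ bₙ exp ((L - μ (n + 1)²) τ) sin ((n + 1) θ)`, the solution of
`∂τ h = μ ∂θ² h + L h` on `(0, π)` with zero Dirichlet conditions and initial datum
`∑ bₙ sin ((n + 1) θ)`. -/
noncomputable def sineFlow (μ L : ℝ) (b : ℕ →₀ ℝ) (τ θ : ℝ) : ℝ :=
  ∑ n ∈ b.support, b n * (exp ((L - μ * (n + 1) ^ 2) * τ) * sin ((n + 1) * θ))

section sineFlow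

variable (μ L : ℝ) (b : ℕ →₀ ℝ)

theorem sineFlow_zero (θ : ℝ) :
    sineFlow μ L b 0 θ = ∑ n ∈ b.support, b n * sin ((n + 1) * θ) := by
  simp [sineFlow]

theorem sineFlow_apply_zero (τ : ℝ) : sineFlow μ L b τ 0 = 0 := by
  simp [sineFlow]

theorem sineFlow_apply_pi (τ : ℝ) : sineFlow μ L b τ π = 0 :=
  Finset.sum_eq_zero fun n _ => by
    have hsin : sin ((n + 1) * π) = 0 := mod_cast sin_nat_mul_pi (n + 1)
    rw [hsin, mul_zero, mul_zero]

theorem continuous_sineFlow : Continuous fun p : ℝ × ℝ => sineFlow μ L b p.1 p.2 := by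
  unfold sineFlow
  fun_prop

theorem contDiff_sineFlow (τ : ℝ) : ContDiff ℝ 2 (sineFlow μ L b τ) := by
  unfold sineFlow
  fun_prop

theorem iteratedDeriv_two_sineFlow (τ θ : ℝ) :
    iteratedDeriv 2 (sineFlow μ L b τ) θ = -∑ n ∈ b.support,
      b n * ((n + 1) ^ 2 * (exp ((L - μ * (n + 1) ^ 2) * τ) * sin ((n + 1) * θ))) := by
  unfold sineFlow
  rw [iteratedDeriv_fun_sum fun n _ => by fun_prop, ← Finset.sum_neg_distrib]
  refine Finset.sum_congr rfl fun n _ => ?_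
  rw [iteratedDeriv_const_mul_field, iteratedDeriv_const_mul_field,
    iteratedDeriv_comp_const_mul contDiff_sin, iteratedDeriv_even_sin 1]
  simp only [pow_one, Pi.mul_apply, Pi.neg_apply, Pi.one_apply]
  ring

theorem hasDerivAt_sineFlow (τ θ : ℝ) :
    HasDerivAt (fun r => sineFlow μ L b r θ)
      (μ * iteratedDeriv 2 (sineFlow μ L b τ) θ + L * sineFlow μ L b τ θ) τ := by
  have hmode : ∀ c : ℝ, HasDerivAt (fun r => exp (c * r)) (c * exp (c * τ)) τ := fun c => by
    simpa [mul_comm] using ((hasDerivAt_id τ).const_mul c).exp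
  refine (HasDerivAt.fun_sum fun (n : ℕ) _ => ((hmode (L - μ * (n + 1) ^ 2)).mul_const
    (sin ((n + 1) * θ))).const_mul (b n)).congr_deriv ?_
  rw [iteratedDeriv_two_sineFlow, sineFlow, mul_neg, Finset.mul_sum, Finset.mul_sum,
    ← Finset.sum_neg_distrib, ← Finset.sum_add_distrib]
  exact Finset.sum_congr rfl fun n _ => by ring

variable {μ L b}

theorem sineFlow_nonneg (hμ : 0 ≤ μ) (hinit : ∀ θ ∈ Icc 0 π, 0 ≤ sineFlow μ L b 0 θ)
    {τ θ : ℝ} (hτ : 0 ≤ τ) (hθ : θ ∈ Icc 0 π) : 0 ≤ sineFlow μ L b τ θ := by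
  refine neg_nonpos.1 (heat_weak_maximum_principle (L := L)
    (w := fun τ θ => -sineFlow μ L b τ θ) hμ
    (continuous_sineFlow μ L b).neg.continuousOn
    (fun τ _ θ _ => (hasDerivAt_sineFlow μ L b τ θ).neg) (fun τ _ θ _ _ => ?_)
    (fun θ hθ => neg_nonpos.2 (hinit θ hθ)) (fun τ _ => ?_) (fun τ _ => ?_) hτ hθ)
  · rw [iteratedDeriv_fun_neg]
    exact le_of_eq (by ring)
  · simp [sineFlow_apply_zero]
  · simp [sineFlow_apply_pi]

variable (μ L b)

theorem abs_coeff_le_integral_abs_sineFlow (n : ℕ) :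
    |b n| ≤ 2 / π * ∫ θ in (0 : ℝ)..π, |sineFlow μ L b 0 θ| := by
  have hcont : Continuous (sineFlow μ L b 0) := (contDiff_sineFlow μ L b 0).continuous
  have hcoeff : ∫ θ in (0 : ℝ)..π, sineFlow μ L b 0 θ * sin ((n + 1) * θ) = b n * (π / 2) := by
    simp only [sineFlow_zero, Finset.sum_mul, mul_assoc]
    rw [intervalIntegral.integral_finsetSum
      fun m _ => Continuous.intervalIntegrable (by fun_prop) _ _]
    simp only [intervalIntegral.integral_const_mul, integral_sin_mul_sin_zero_pi, mul_ite,
      mul_zero, Finset.sum_ite_eq', Finsupp.mem_support_iff, ite_not]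
    split_ifs with hn
    · rw [hn, zero_mul]
    · rfl
  have hbound : |b n * (π / 2)| ≤ ∫ θ in (0 : ℝ)..π, |sineFlow μ L b 0 θ| := by
    rw [← hcoeff]
    refine (abs_integral_le_integral_abs pi_pos.le).trans (integral_mono_on pi_pos.le
      (Continuous.intervalIntegrable (by fun_prop) _ _)
      (hcont.abs.intervalIntegrable _ _) fun θ _ => ?_)
    rw [abs_mul]
    exact mul_le_of_le_one_right (abs_nonneg _) (abs_sin_le_one _)
  rw [abs_mul, abs_of_pos pi_div_two_pos] at hbound
  rw [div_mul_eq_mul_div, le_div_iff₀ pi_pos]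
  linarith

variable {μ L b}

theorem abs_sineFlow_le (hμ : 0 < μ) {τ : ℝ} (hτ : 1 ≤ τ) (θ : ℝ) :
    |sineFlow μ L b τ θ| ≤ 2 / π * (1 - exp (-μ))⁻¹ * exp ((L - μ) * τ) *
      ∫ θ in (0 : ℝ)..π, |sineFlow μ L b 0 θ| := by
  set I := ∫ θ in (0 : ℝ)..π, |sineFlow μ L b 0 θ|
  have hI : 0 ≤ I := integral_nonneg pi_pos.le fun _ _ => abs_nonneg _
  have hexp : ∀ n : ℕ,
      exp ((L - μ * (n + 1) ^ 2) * τ) ≤ exp ((L - μ) * τ) * exp (-μ) ^ n := fun n => by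
    rw [← exp_nat_mul, ← exp_add, exp_le_exp]
    have hn : (n : ℝ) ≤ ((n + 1) ^ 2 - 1) * τ := by
      nlinarith [mul_nonneg n.cast_nonneg (sub_nonneg.2 hτ), sq_nonneg (n : ℝ)]
    linarith [mul_le_mul_of_nonneg_left hn hμ.le]
  have hterm : ∀ n ∈ b.support, |b n * (exp ((L - μ * (n + 1) ^ 2) * τ) * sin ((n + 1) * θ))| ≤
      2 / π * I * exp ((L - μ) * τ) * exp (-μ) ^ n := fun n _ => by
    rw [abs_mul, abs_mul, abs_exp, mul_assoc (2 / π * I)]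
    exact mul_le_mul (abs_coeff_le_integral_abs_sineFlow μ L b n)
      ((mul_le_of_le_one_right (exp_pos _).le (abs_sin_le_one _)).trans (hexp n))
      (by positivity) (by positivity)
  have hratio : exp (-μ) < 1 := exp_lt_one_iff.2 (neg_neg_of_pos hμ)
  calc |sineFlow μ L b τ θ|
      ≤ ∑ n ∈ b.support, 2 / π * I * exp ((L - μ) * τ) * exp (-μ) ^ n :=
        (Finset.abs_sum_le_sum_abs _ _).trans (Finset.sum_le_sum hterm)
    _ = 2 / π * I * exp ((L - μ) * τ) * ∑ n ∈ b.support, exp (-μ) ^ n := by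
        rw [Finset.mul_sum]
    _ ≤ 2 / π * I * exp ((L - μ) * τ) * (1 - exp (-μ))⁻¹ := by
        rw [← tsum_geometric_of_lt_one (exp_pos _).le hratio]
        gcongr
        exact (summable_geometric_of_lt_one (exp_pos _).le hratio).sum_le_tsum _
          fun n _ => by positivity
    _ = 2 / π * (1 - exp (-μ))⁻¹ * exp ((L - μ) * τ) * I := by ring

end sineFlow

theorem mul_cos_mem_span_sin {f : ℝ → ℝ}
    (hf : f ∈ Submodule.span ℝ (range fun (n : ℕ) (θ : ℝ) => sin ((n + 1) * θ))) :
    f * cos ∈ Submodule.span ℝ (range fun (n : ℕ) (θ : ℝ) => sin ((n + 1) * θ)) := by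
  set S := Submodule.span ℝ (range fun (n : ℕ) (θ : ℝ) => sin ((n + 1) * θ))
  suffices hS : S ≤ S.comap (LinearMap.mulRight ℝ cos) from hS hf
  refine Submodule.span_le.2 ?_
  rintro _ ⟨n, rfl⟩
  have hmode : ∀ m : ℕ, (fun θ : ℝ => sin (m * θ)) ∈ S
    | 0 => by
      simp only [Nat.cast_zero, zero_mul, sin_zero]
      exact S.zero_mem
    | m + 1 => Submodule.subset_span ⟨m, by simp⟩
  have hprod : (fun θ : ℝ => sin ((n + 1) * θ)) * cos =
      (1 / 2 : ℝ) • ((fun θ => sin (n * θ)) + fun θ => sin ((n + 2 : ℕ) * θ)) := by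
    ext θ
    have htwo := two_mul_sin_mul_cos ((n + 1) * θ) θ
    simp only [Pi.smul_apply, Pi.add_apply, Pi.mul_apply, smul_eq_mul]
    push_cast
    ring_nf at htwo ⊢
    linarith
  simp only [SetLike.mem_coe, Submodule.mem_comap, LinearMap.mulRight_apply, hprod]
  exact S.smul_mem _ (add_mem (hmode n) (hmode (n + 2)))

theorem sin_mul_aeval_cos_mem_span_sin (P : ℝ[X]) :
    sin * aeval cos P ∈ Submodule.span ℝ (range fun (n : ℕ) (θ : ℝ) => sin ((n + 1) * θ)) := by
  induction P using Polynomial.induction_on with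
  | C c =>
    rw [aeval_C, ← Algebra.commutes, ← Algebra.smul_def]
    exact Submodule.smul_mem _ c (Submodule.subset_span ⟨0, by simp⟩)
  | add P Q hP hQ =>
    rw [map_add, mul_add]
    exact add_mem hP hQ
  | monomial n c h =>
    rw [pow_succ, ← mul_assoc, map_mul, aeval_X, ← mul_assoc]
    exact mul_cos_mem_span_sin h

theorem exists_sineFlow_zero_eq (μ L : ℝ) (P : ℝ[X]) :
    ∃ b : ℕ →₀ ℝ, ∀ θ, sineFlow μ L b 0 θ = sin θ * P.eval (cos θ) := by
  obtain ⟨b, hb⟩ :=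
    Finsupp.mem_span_range_iff_exists_finsupp.1 (sin_mul_aeval_cos_mem_span_sin P)
  refine ⟨b, fun θ => ?_⟩
  simpa [sineFlow_zero, Finsupp.sum, aeval_fn_apply, coe_aeval_eq_eval] using congrFun hb θ

theorem exists_polynomial_sin_mul_eval_cos_near {K : Set ℝ} (hK : IsCompact K) (hKπ : K ⊆ Ioo 0 π)
    {g : ℝ → ℝ} (hg : Continuous g) (hg0 : ∀ θ, 0 ≤ g θ) {ε : ℝ} (hε : 0 < ε) :
    ∃ P : ℝ[X], (∀ θ ∈ Icc 0 π, 0 ≤ sin θ * P.eval (cos θ)) ∧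
      (∀ θ ∈ K, g θ ≤ sin θ * P.eval (cos θ)) ∧
      ∀ θ ∈ Icc 0 π, sin θ * P.eval (cos θ) ≤ g θ + ε := by
  obtain ⟨m, hm, hmsin⟩ := hK.exists_forall_le' continuous_sin.continuousOn
    (a := 0) fun θ hθ => sin_pos_of_mem_Ioo (hKπ hθ)
  have hden : ∀ θ, 0 < max (sin θ) m := fun θ => hm.trans_le (le_max_right _ _)
  -- Capping the denominator below keeps the quotient `g / sin` continuous at `0` and `π`.
  set G : ℝ → ℝ := fun θ => g θ / max (sin θ) m
  have hGcont : Continuous G := hg.div (by fun_prop) fun θ => (hden θ).ne'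
  obtain ⟨P, hP⟩ := exists_polynomial_near_of_continuousOn (-1) 1
    (fun c => G (arccos c) + ε / 2) (by fun_prop) (ε / 2) (half_pos hε)
  have hPG : ∀ θ ∈ Icc 0 π, G θ ≤ P.eval (cos θ) ∧ P.eval (cos θ) ≤ G θ + ε := fun θ hθ => by
    have hnear := abs_lt.1 (hP (cos θ) (cos_mem_Icc θ))
    rw [arccos_cos hθ.1 hθ.2] at hnear
    constructor <;> linarith [hnear.1, hnear.2]
  have hG0 : ∀ θ, 0 ≤ G θ := fun θ => div_nonneg (hg0 θ) (hden θ).le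
  refine ⟨P, fun θ hθ => ?_, fun θ hθ => ?_, fun θ hθ => ?_⟩
  · exact mul_nonneg (sin_nonneg_of_mem_Icc hθ) ((hG0 θ).trans (hPG θ hθ).1)
  · have hsin : 0 < sin θ := sin_pos_of_mem_Ioo (hKπ hθ)
    have hgG : g θ = sin θ * G θ := by
      simp only [G, max_eq_left (hmsin θ hθ)]
      field_simp
    rw [hgG]
    exact mul_le_mul_of_nonneg_left (hPG θ (Ioo_subset_Icc_self (hKπ hθ))).1 hsin.le
  · have hsin : 0 ≤ sin θ := sin_nonneg_of_mem_Icc hθ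
    have hgG : sin θ * G θ ≤ g θ :=
      (mul_le_mul_of_nonneg_right (le_max_left _ m) (hG0 θ)).trans_eq
        (mul_div_cancel₀ _ (hden θ).ne')
    calc sin θ * P.eval (cos θ)
        ≤ sin θ * (G θ + ε) := mul_le_mul_of_nonneg_left (hPG θ hθ).2 hsin
      _ ≤ g θ + ε := by linarith [mul_le_of_le_one_left hε.le (sin_le_one θ)]

theorem integral_IccExtend_eq {a b c d : ℝ} (hca : c ≤ a) (hab : a ≤ b) (hbd : b ≤ d) {f : ℝ → ℝ}
    (ha : f a = 0) (hb : f b = 0) :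
    ∫ x in c..d, IccExtend hab (domRestrict (Icc a b) f) x = ∫ x in a..b, f x := by
  rw [integral_of_le (hca.trans (hab.trans hbd)), integral_of_le hab]
  refine (setIntegral_eq_of_subset_of_forall_sdiff_eq_zero measurableSet_Ioc
    (Ioc_subset_Ioc hca hbd) fun x hx => ?_).trans
    (setIntegral_congr_fun measurableSet_Ioc fun x hx => ?_)
  · rcases le_or_gt x a with hxa | hax
    · rw [IccExtend_of_le_left hab _ hxa, domRestrict_apply, ha]
    · have hbx : b ≤ x := (not_le.1 fun hxb => hx.2 ⟨hax, hxb⟩).le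
      rw [IccExtend_of_right_le hab _ hbx, domRestrict_apply, hb]
  · rw [IccExtend_of_mem hab _ (Ioc_subset_Icc_self hx), domRestrict_apply]

theorem integral_abs_le_add_integral_sq {a b : ℝ} (hab : a ≤ b) {f : ℝ → ℝ}
    (hf : ContinuousOn f (Icc a b)) : ∫ x in a..b, |f x| ≤ (b - a) + ∫ x in a..b, f x ^ 2 := by
  have hsq : IntervalIntegrable (fun x => f x ^ 2) volume a b :=
    (hf.pow 2).intervalIntegrable_of_Icc hab
  calc ∫ x in a..b, |f x| ≤ ∫ x in a..b, (1 + f x ^ 2) :=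
        integral_mono_on hab (hf.abs.intervalIntegrable_of_Icc hab)
          (intervalIntegrable_const.add hsq) fun x _ => by
            linarith [sq_abs (f x), sq_nonneg (|f x| - 1), sq_nonneg (f x)]
    _ = (b - a) + ∫ x in a..b, f x ^ 2 := by
        rw [intervalIntegral.integral_add intervalIntegrable_const hsq,
          intervalIntegral.integral_const, smul_eq_mul, mul_one]

theorem exists_sineFlow_majorant (μ L : ℝ) {a b : ℝ} (ha : 0 < a) (hab : a ≤ b) (hb : b < π)
    {f : ℝ → ℝ} (hf : ContinuousOn f (Icc a b)) (hf0 : ∀ x ∈ Icc a b, 0 ≤ f x)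
    (hfa : f a = 0) (hfb : f b = 0) {ε : ℝ} (hε : 0 < ε) :
    ∃ c : ℕ →₀ ℝ, (∀ θ ∈ Icc 0 π, 0 ≤ sineFlow μ L c 0 θ) ∧
      (∀ θ ∈ Icc a b, f θ ≤ sineFlow μ L c 0 θ) ∧
      ∫ θ in (0 : ℝ)..π, |sineFlow μ L c 0 θ| ≤ (∫ θ in a..b, f θ) + ε := by
  set g := IccExtend hab (domRestrict (Icc a b) f)
  have hg : Continuous g := continuous_IccExtend_iff.2 hf.domRestrict
  obtain ⟨P, hP0, hfP, hPg⟩ := exists_polynomial_sin_mul_eval_cos_near isCompact_Icc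
    (Icc_subset_Ioo ha hb) hg (fun θ => hf0 _ (projIcc a b hab θ).2) (div_pos hε pi_pos)
  obtain ⟨c, hc⟩ := exists_sineFlow_zero_eq μ L P
  simp only [← hc] at hP0 hfP hPg
  refine ⟨c, hP0, fun θ hθ => ?_, ?_⟩
  · simpa only [g, IccExtend_of_mem hab _ hθ, domRestrict_apply] using hfP θ hθ
  calc ∫ θ in (0 : ℝ)..π, |sineFlow μ L c 0 θ|
      ≤ ∫ θ in (0 : ℝ)..π, (g θ + ε / π) := by
        refine integral_mono_on pi_pos.le
          ((contDiff_sineFlow μ L c 0).continuous.abs.intervalIntegrable _ _)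
          ((hg.add continuous_const).intervalIntegrable _ _) fun θ hθ => ?_
        rw [abs_of_nonneg (hP0 θ hθ)]
        exact hPg θ hθ
    _ = (∫ θ in a..b, f θ) + ε := by
        rw [intervalIntegral.integral_add (hg.intervalIntegrable _ _) intervalIntegrable_const,
          integral_IccExtend_eq ha.le hab hb.le hfa hfb, intervalIntegral.integral_const,
          sub_zero, smul_eq_mul, mul_div_cancel₀ _ pi_pos.ne']

theorem iteratedDeriv_two_comp_mul_add (f : ℝ → ℝ) (c d x : ℝ) :
    iteratedDeriv 2 (fun y => f (c * y + d)) x = c ^ 2 * iteratedDeriv 2 f (c * x + d) := by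
  have hderiv : ∀ g : ℝ → ℝ,
      deriv (fun y => g (c * y + d)) = fun y => c * deriv g (c * y + d) := fun g => by
    ext y
    rw [deriv_comp_mul_left c (fun z => g (z + d)) y, deriv_comp_add_const, smul_eq_mul]
  simp only [iteratedDeriv_succ, iteratedDeriv_zero, hderiv, deriv_const_mul_field]
  ring

/-- `v` is a classical solution of `∂ₜ v = ν ∂ₓ² v - l v` on `ℝ × (a, b)`, continuous up to the
lateral boundary, where it vanishes. The equation is only pointwise: neither `l` nor the
derivatives of `v` are assumed to depend continuously, or even measurably, on `(t, x)`. -/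
structure IsDirichletHeatSolution (ν : ℝ) (l : ℝ → ℝ → ℝ) (a b : ℝ) (v : ℝ → ℝ → ℝ) : Prop where
  continuousOn : ContinuousOn (fun p : ℝ × ℝ => v p.1 p.2) (univ ×ˢ Icc a b)
  contDiffAt : ∀ t, ∀ x ∈ Ioo a b, ContDiffAt ℝ 2 (v t) x
  hasDerivAt : ∀ t, ∀ x ∈ Ioo a b,
    HasDerivAt (fun s => v s x) (ν * iteratedDeriv 2 (v t) x - l t x * v t x) t
  left_eq_zero : ∀ t, v t a = 0
  right_eq_zero : ∀ t, v t b = 0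

namespace IsDirichletHeatSolution

variable {ν L a b : ℝ} {l v w : ℝ → ℝ → ℝ}

theorem of_contDiff (hreg : ∀ t, ContDiff ℝ 2 (v t))
    (hjoint : Continuous fun p : ℝ × ℝ => v p.1 p.2)
    (hpde : ∀ t, ∀ x ∈ Icc a b,
      HasDerivAt (fun s => v s x) (ν * iteratedDeriv 2 (v t) x - l t x * v t x) t)
    (hbc : ∀ t, v t a = 0 ∧ v t b = 0) : IsDirichletHeatSolution ν l a b v where
  continuousOn := hjoint.continuousOn
  contDiffAt t _ _ := (hreg t).contDiffAt
  hasDerivAt t x hx := hpde t x (Ioo_subset_Icc_self hx)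
  left_eq_zero t := (hbc t).1
  right_eq_zero t := (hbc t).2

theorem neg (hv : IsDirichletHeatSolution ν l a b v) :
    IsDirichletHeatSolution ν l a b fun t x => -v t x where
  continuousOn := hv.continuousOn.neg
  contDiffAt t x hx := (hv.contDiffAt t x hx).neg
  hasDerivAt t x hx := (hv.hasDerivAt t x hx).neg.congr_deriv (by
    rw [iteratedDeriv_fun_neg]
    ring)
  left_eq_zero t := by rw [hv.left_eq_zero, neg_zero]
  right_eq_zero t := by rw [hv.right_eq_zero, neg_zero]

theorem sub (hv : IsDirichletHeatSolution ν l a b v) (hw : IsDirichletHeatSolution ν l a b w) :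
    IsDirichletHeatSolution ν l a b fun t x => v t x - w t x where
  continuousOn := hv.continuousOn.sub hw.continuousOn
  contDiffAt t x hx := (hv.contDiffAt t x hx).sub (hw.contDiffAt t x hx)
  hasDerivAt t x hx := ((hv.hasDerivAt t x hx).sub (hw.hasDerivAt t x hx)).congr_deriv (by
    rw [iteratedDeriv_fun_sub (hv.contDiffAt t x hx) (hw.contDiffAt t x hx)]
    ring)
  left_eq_zero t := by rw [hv.left_eq_zero, hw.left_eq_zero, sub_zero]
  right_eq_zero t := by rw [hv.right_eq_zero, hw.right_eq_zero, sub_zero]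

theorem comp_mul_add {c d : ℝ} (hc : 0 < c)
    (hv : IsDirichletHeatSolution ν l (c * a + d) (c * b + d) v) :
    IsDirichletHeatSolution (ν / c ^ 2) (fun t x => l t (c * x + d)) a b
      fun t x => v t (c * x + d) := by
  have hmaps : MapsTo (fun x => c * x + d) (Ioo a b) (Ioo (c * a + d) (c * b + d)) :=
    fun x hx => by simpa [hc] using hx
  have hmaps' : MapsTo (fun x => c * x + d) (Icc a b) (Icc (c * a + d) (c * b + d)) :=
    fun x hx => by simpa [hc] using hx
  exact
    { continuousOn := hv.continuousOn.comp (f := fun p : ℝ × ℝ => (p.1, c * p.2 + d))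
        (by fun_prop) fun p hp => ⟨mem_univ _, hmaps' hp.2⟩
      contDiffAt := fun t x hx => (hv.contDiffAt t _ (hmaps hx)).comp
        (f := fun x => c * x + d) x (by fun_prop)
      hasDerivAt := fun t x hx => (hv.hasDerivAt t _ (hmaps hx)).congr_deriv (by
        rw [iteratedDeriv_two_comp_mul_add]
        field_simp)
      left_eq_zero := hv.left_eq_zero
      right_eq_zero := hv.right_eq_zero }

theorem le_sineFlow (hv : IsDirichletHeatSolution ν l a b v) (hν : 0 ≤ ν) (ha : 0 ≤ a)
    (hb : b ≤ π) (hl : ∀ t, ∀ x ∈ Ioo a b, -L ≤ l t x) {c : ℕ →₀ ℝ} {s : ℝ}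
    (hc : ∀ θ ∈ Icc 0 π, 0 ≤ sineFlow ν L c 0 θ)
    (hinit : ∀ x ∈ Icc a b, v s x ≤ sineFlow ν L c 0 x) {t x : ℝ} (ht : s ≤ t)
    (hx : x ∈ Icc a b) : v t x ≤ sineFlow ν L c (t - s) x := by
  have hflow : ∀ t, s ≤ t → ∀ x ∈ Icc a b, 0 ≤ sineFlow ν L c (t - s) x := fun t ht x hx =>
    sineFlow_nonneg hν hc (sub_nonneg.2 ht) (Icc_subset_Icc ha hb hx)
  have hab : a ≤ b := hx.1.trans hx.2
  refine sub_nonpos.1 (heat_weak_maximum_principle (L := L)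
    (w := fun t x => v t x - sineFlow ν L c (t - s) x) hν ?_
    (fun t _ x hx => (hv.hasDerivAt t x hx).sub
      ((hasDerivAt_sineFlow ν L c (t - s) x).comp_sub_const t s))
    (fun t ht x hx hpos => ?_) (fun x hx => ?_) (fun t ht => ?_) (fun t ht => ?_) ht hx)
  · exact (hv.continuousOn.mono (prod_mono_left (subset_univ _))).sub
      ((continuous_sineFlow ν L c).comp
        (f := fun p : ℝ × ℝ => (p.1 - s, p.2)) (by fun_prop)).continuousOn
  · have hvpos : 0 ≤ v t x :=
      (hflow t ht.le x (Ioo_subset_Icc_self hx)).trans (sub_pos.1 hpos).le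
    rw [iteratedDeriv_fun_sub (hv.contDiffAt t x hx) (contDiff_sineFlow ν L c _).contDiffAt]
    linarith [mul_le_mul_of_nonneg_right (hl t x hx) hvpos]
  · simpa using hinit x hx
  · simpa [hv.left_eq_zero] using hflow t ht a (left_mem_Icc.2 hab)
  · simpa [hv.right_eq_zero] using hflow t ht b (right_mem_Icc.2 hab)

theorem continuousOn_slice (hv : IsDirichletHeatSolution ν l a b v) (t : ℝ) :
    ContinuousOn (v t) (Icc a b) :=
  hv.continuousOn.comp (f := fun x => (t, x)) (by fun_prop) fun _ hx => ⟨mem_univ _, hx⟩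

theorem abs_le_mul_integral_abs (hv : IsDirichletHeatSolution ν l a b v) (hν : 0 < ν) (ha : 0 < a)
    (hb : b < π) (hl : ∀ t, ∀ x ∈ Ioo a b, -L ≤ l t x) {s t x : ℝ} (hst : s + 1 ≤ t)
    (hx : x ∈ Icc a b) :
    |v t x| ≤ 2 / π * (1 - exp (-ν))⁻¹ * exp ((L - ν) * (t - s)) * ∫ y in a..b, |v s y| := by
  set C := 2 / π * (1 - exp (-ν))⁻¹ * exp ((L - ν) * (t - s))
  have hC : 0 < C := by
    have := sub_pos.2 (exp_lt_one_iff.2 (neg_neg_of_pos hν))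
    positivity
  have happrox : ∀ ε, 0 < ε → |v t x| ≤ C * ((∫ y in a..b, |v s y|) + ε) := fun ε hε => by
    obtain ⟨c, hc0, hvc, hcI⟩ := exists_sineFlow_majorant ν L ha (hx.1.trans hx.2) hb
      (hv.continuousOn_slice s).abs (fun y _ => abs_nonneg _)
      (by simp [hv.left_eq_zero]) (by simp [hv.right_eq_zero]) hε
    have hst' : s ≤ t := by linarith
    have hflow : |v t x| ≤ sineFlow ν L c (t - s) x := abs_le'.2
      ⟨hv.le_sineFlow hν.le ha.le hb.le hl hc0
          (fun y hy => (le_abs_self _).trans (hvc y hy)) hst' hx,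
        hv.neg.le_sineFlow hν.le ha.le hb.le hl hc0
          (fun y hy => (neg_le_abs _).trans (hvc y hy)) hst' hx⟩
    calc |v t x| ≤ |sineFlow ν L c (t - s) x| := hflow.trans (le_abs_self _)
      _ ≤ C * ∫ θ in (0 : ℝ)..π, |sineFlow ν L c 0 θ| := abs_sineFlow_le hν (by linarith) x
      _ ≤ C * ((∫ y in a..b, |v s y|) + ε) := mul_le_mul_of_nonneg_left hcI hC.le
  refine le_of_forall_pos_le_add fun δ hδ => (happrox (δ / C) (div_pos hδ hC)).trans_eq ?_
  rw [mul_add, mul_div_cancel₀ _ hC.ne']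

theorem eq_zero_of_Icc_subset_Ioo_zero_pi (hv : IsDirichletHeatSolution ν l a b v) (hν : 0 < ν)
    (ha : 0 < a) (hb : b < π) (hgap : L < ν) (hl : ∀ t, ∀ x ∈ Ioo a b, -L ≤ l t x) {M : ℝ}
    (hbdd : ∃ᶠ t in atBot, ∫ x in a..b, |v t x| ≤ M) (t : ℝ) {x : ℝ} (hx : x ∈ Icc a b) :
    v t x = 0 := by
  have hexponent : Tendsto (fun s => (L - ν) * (t - s)) atBot atBot :=
    (tendsto_atTop_add_const_left _ t tendsto_neg_atBot_atTop).const_mul_atTop_of_neg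
      (sub_neg.2 hgap)
  have hdecay : Tendsto (fun s => 2 / π * (1 - exp (-ν))⁻¹ * exp ((L - ν) * (t - s)) * M) atBot
      (𝓝 0) := by
    simpa using ((tendsto_exp_atBot.comp hexponent).const_mul _).mul_const M
  have hbound : ∃ᶠ s in atBot,
      |v t x| ≤ 2 / π * (1 - exp (-ν))⁻¹ * exp ((L - ν) * (t - s)) * M := by
    refine (hbdd.and_eventually (eventually_le_atBot (t - 1))).mono fun s ⟨hM, hs⟩ => ?_
    have := sub_pos.2 (exp_lt_one_iff.2 (neg_neg_of_pos hν))
    exact (hv.abs_le_mul_integral_abs hν ha hb hl (le_sub_iff_add_le.1 hs) hx).trans (by gcongr)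
  exact abs_nonpos_iff.1 (ge_of_tendsto_of_frequently hdecay hbound)

end IsDirichletHeatSolution

theorem exists_scale_of_spectral_gap {ν L r : ℝ} (hr : 0 < r) (hgap : L < ν * (π / r) ^ 2) :
    ∃ c, 0 < c ∧ r < c * π ∧ L < ν / c ^ 2 := by
  have hc₀ : 0 < r / π := div_pos hr pi_pos
  have hcont : ContinuousAt (fun c : ℝ => ν / c ^ 2) (r / π) := by
    fun_prop (disch := positivity)
  have hgap' : L < ν / (r / π) ^ 2 := by
    rwa [← inv_div, inv_pow, ← div_eq_mul_inv] at hgap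
  have hnear : ∀ᶠ c in 𝓝[>] (r / π), L < ν / c ^ 2 :=
    (hcont.eventually_const_lt hgap').filter_mono nhdsWithin_le_nhds
  obtain ⟨c, hcL, hc⟩ := (hnear.and self_mem_nhdsWithin).exists
  exact ⟨c, hc₀.trans hc, (div_lt_iff₀ pi_pos).1 hc, hcL⟩

theorem backward_uniqueness_heat_strip_general {ν L a b : ℝ} {l v : ℝ → ℝ → ℝ} (hν : 0 < ν)
    (hab : a < b) (hgap : L < ν * (π / (b - a)) ^ 2) (hl : ∀ t, ∀ x ∈ Ioo a b, -L ≤ l t x)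
    (hv : IsDirichletHeatSolution ν l a b v)
    (hbdd : ∃ M, ∃ᶠ t in atBot, ∫ x in a..b, |v t x| ≤ M) (t : ℝ) {x : ℝ} (hx : x ∈ Icc a b) :
    v t x = 0 := by
  obtain ⟨c, hc, hcπ, hcL⟩ := exists_scale_of_spectral_gap (sub_pos.2 hab) hgap
  obtain ⟨M, hM⟩ := hbdd
  -- The map `y ↦ c * y + d` carries `(0, π)` to an interval concentric with `[a, b]` containing it.
  set d := (a + b) / 2 - c * (π / 2) with hd
  have hcancel : ∀ y, c * ((y - d) / c) + d = y := fun y => by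
    rw [mul_div_cancel₀ _ hc.ne', sub_add_cancel]
  have hrescaled : IsDirichletHeatSolution (ν / c ^ 2) (fun t y => l t (c * y + d))
      ((a - d) / c) ((b - d) / c) fun t y => v t (c * y + d) :=
    .comp_mul_add hc (by simpa only [hcancel] using hv)
  have hl' : ∀ t, ∀ y ∈ Ioo ((a - d) / c) ((b - d) / c), -L ≤ l t (c * y + d) := fun t y hy =>
    hl t _ ⟨sub_lt_iff_lt_add.1 ((div_lt_iff₀' hc).1 hy.1),
      lt_sub_iff_add_lt.1 ((lt_div_iff₀' hc).1 hy.2)⟩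
  have hM' : ∃ᶠ t in atBot, ∫ y in (a - d) / c..(b - d) / c, |v t (c * y + d)| ≤ c⁻¹ * M :=
    hM.mono fun t ht => by
      rw [integral_comp_mul_add (fun y => |v t y|) hc.ne' d, hcancel, hcancel, smul_eq_mul]
      gcongr
  have hx' : (x - d) / c ∈ Icc ((a - d) / c) ((b - d) / c) :=
    ⟨div_le_div_of_nonneg_right (sub_le_sub_right hx.1 d) hc.le,
      div_le_div_of_nonneg_right (sub_le_sub_right hx.2 d) hc.le⟩
  have hzero := hrescaled.eq_zero_of_Icc_subset_Ioo_zero_pi (by positivity)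
    (div_pos (by linarith) hc) ((div_lt_iff₀ hc).2 (by linarith)) hcL hl' hM' t hx'
  rwa [hcancel] at hzero

/-- Backward uniqueness for the 1D linear heat equation with bounded potential on a
small interval: if `u₁, u₂` solve `∂_t v = ν ∂²ₓ v − l(t,x) v` on `[0,x₀] × ℝ` with
Dirichlet boundary conditions at `x = 0` and `x = x₀`, `|l| ≤ L` and
`ν (π/x₀)² > L`, and the difference stays bounded in `L²(0,x₀)` as `t → −∞`, then
`u₁ ≡ u₂` on `[0,x₀] × ℝ`. -/
theorem backward_uniqueness_heat_strip
    (ν x₀ L : ℝ) (hν : 0 < ν) (hx₀ : 0 < x₀)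
    (hgap : L < ν * (π / x₀) ^ 2)
    (l : ℝ → ℝ → ℝ) (hl : ∀ t : ℝ, ∀ x ∈ Set.Icc 0 x₀, |l t x| ≤ L)
    (u₁ u₂ : ℝ → ℝ → ℝ)
    (hreg₁ : ∀ t : ℝ, ContDiff ℝ 2 (u₁ t)) (hreg₂ : ∀ t : ℝ, ContDiff ℝ 2 (u₂ t))
    (hjoint₁ : Continuous fun p : ℝ × ℝ => u₁ p.1 p.2)
    (hjoint₂ : Continuous fun p : ℝ × ℝ => u₂ p.1 p.2)
    (hpde₁ : ∀ t : ℝ, ∀ x ∈ Set.Icc 0 x₀,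
      HasDerivAt (fun s => u₁ s x) (ν * iteratedDeriv 2 (u₁ t) x - l t x * u₁ t x) t)
    (hpde₂ : ∀ t : ℝ, ∀ x ∈ Set.Icc 0 x₀,
      HasDerivAt (fun s => u₂ s x) (ν * iteratedDeriv 2 (u₂ t) x - l t x * u₂ t x) t)
    (hbc₁ : ∀ t : ℝ, u₁ t 0 = 0 ∧ u₁ t x₀ = 0)
    (hbc₂ : ∀ t : ℝ, u₂ t 0 = 0 ∧ u₂ t x₀ = 0)
    (hbdd : ∃ M : ℝ, ∀ t ≤ (0:ℝ), (∫ x in (0:ℝ)..x₀, (u₁ t x - u₂ t x) ^ 2) ≤ M) :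
    ∀ t : ℝ, ∀ x ∈ Set.Icc 0 x₀, u₁ t x = u₂ t x := by
  have hv := (IsDirichletHeatSolution.of_contDiff hreg₁ hjoint₁ hpde₁ hbc₁).sub
    (IsDirichletHeatSolution.of_contDiff hreg₂ hjoint₂ hpde₂ hbc₂)
  obtain ⟨M, hM⟩ := hbdd
  have hbdd_abs : ∀ t ≤ 0, ∫ x in (0 : ℝ)..x₀, |u₁ t x - u₂ t x| ≤ x₀ - 0 + M := fun t ht =>
    (integral_abs_le_add_integral_sq hx₀.le (hv.continuousOn_slice t)).trans (by grw [hM t ht])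
  exact fun t x hx => sub_eq_zero.1 (backward_uniqueness_heat_strip_general hν hx₀
    (by rwa [sub_zero]) (fun t x hx => (abs_le.1 (hl t x (Ioo_subset_Icc_self hx))).1) hv
    ⟨_, ((eventually_le_atBot 0).mono hbdd_abs).frequently⟩ t hx)
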